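/- For every n ≥ 1, the number of connected Kreweras words of length 3n equals 2^{n+1}·(4n−3)!/((3n−1)!·n!); equivalently, this number multiplied by (3n−1)!·n! equals 2^{n+1}·(4n−3)!. -/

import Mathlib

/-- The three letters of a Kreweras word. -/
inductive KLetter : Type
  | A | B | C
deriving DecidableEq, Repr

open KLetter

/-- `w` is a Kreweras word of length `3 * n`: it has `n` `A`'s, `n` `B`'s, `n` `C`'s,
and every prefix has at least as many `A`'s as `B`'s and at least as many `A`'s as `C`'s. -/
def IsKrewerasWord (n : ℕ) (w : List KLetter) : Prop :=
  w.length = 3 * n ∧ w.count A = n ∧ w.count B = n ∧ w.count C = n ∧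
  ∀ k : ℕ, (w.take k).count B ≤ (w.take k).count A ∧
           (w.take k).count C ≤ (w.take k).count A

/-- `kiota w` is the smallest index `ι ≥ 1` (1-indexed) such that the prefix of
length `ι` of `w` has equally many `A`'s as `B`'s, or equally many `A`'s as `C`'s
(and `0` if no such index exists). -/
def kiota (w : List KLetter) : ℕ :=
  (((List.range (w.length + 1)).filter fun k =>
      decide (1 ≤ k) &&
      (((w.take k).count A == (w.take k).count B) ||
       ((w.take k).count A == (w.take k).count C))).headD 0)

/-- Promotion of a Kreweras word:
`pro w = (w₂, …, w_{ι-1}, A, w_{ι+1}, …, w_{3n}, w_ι)` where `ι = kiota w`. -/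
def pro (w : List KLetter) : List KLetter :=
  ((w.drop 1).set (kiota w - 2) A) ++ [w.getD (kiota w - 1) A]

/-- The trip permutation `σ_w` of a Kreweras word of length `3 * n`, as a function on
1-indexed positions: `σ_w i` is the unique element of `{1, …, 3n}` congruent to
`kiota (pro^[i-1] w) + i - 1` modulo `3 * n`. -/
def ksigma (n : ℕ) (w : List KLetter) (i : ℕ) : ℕ :=
  (kiota (pro^[i - 1] w) + i - 2) % (3 * n) + 1

/-- `keps w i` is the letter of `pro^[i-1] w` in (1-indexed) position `kiota (pro^[i-1] w)`. -/
def keps (w : List KLetter) (i : ℕ) : KLetter :=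
  (pro^[i - 1] w).getD (kiota (pro^[i - 1] w) - 1) A

/-- The negation swapping `B` and `C` (and fixing `A`). -/
def negL : KLetter → KLetter
  | A => A
  | B => C
  | C => B

open Classical in
/-- The involution `τ_i` on Kreweras words of length `3 * n`: swap the letters in
(1-indexed) positions `i` and `i + 1` if the result is again a Kreweras word,
and otherwise do nothing. -/
noncomputable def tau (n i : ℕ) (w : List KLetter) : List KLetter :=
  let w' := (w.set (i - 1) (w.getD i A)).set i (w.getD (i - 1) A)
  if IsKrewerasWord n w' then w' else w

/-- `tauDown n j = τ_j ∘ τ_{j-1} ∘ ⋯ ∘ τ_1`. -/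
noncomputable def tauDown (n : ℕ) : ℕ → List KLetter → List KLetter
  | 0, w => w
  | j + 1, w => tau n (j + 1) (tauDown n j w)

/-- `evacAux n j = (tauDown n 1) ∘ (tauDown n 2) ∘ ⋯ ∘ (tauDown n j)`. -/
noncomputable def evacAux (n : ℕ) : ℕ → List KLetter → List KLetter
  | 0, w => w
  | j + 1, w => evacAux n j (tauDown n (j + 1) w)

/-- Evacuation on Kreweras words of length `3 * n`:
`evac = (τ_1) ∘ (τ_2 ∘ τ_1) ∘ ⋯ ∘ (τ_{3n-1} ∘ ⋯ ∘ τ_2 ∘ τ_1)`. -/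
noncomputable def evac (n : ℕ) (w : List KLetter) : List KLetter :=
  evacAux n (3 * n - 1) w

/-- `tauAsc n k c = τ_{k+c-1} ∘ ⋯ ∘ τ_{k+1} ∘ τ_k`. -/
noncomputable def tauAsc (n k : ℕ) : ℕ → List KLetter → List KLetter
  | 0, w => w
  | j + 1, w => tau n (k + j) (tauAsc n k j w)

/-- `evacStarAux n j = (tauAsc n 1 (3n-1)) ∘ (tauAsc n 2 (3n-2)) ∘ ⋯ ∘ (tauAsc n j (3n-j))`. -/
noncomputable def evacStarAux (n : ℕ) : ℕ → List KLetter → List KLetter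
  | 0, w => w
  | j + 1, w => evacStarAux n j (tauAsc n (j + 1) (3 * n - (j + 1)) w)

/-- Dual evacuation on Kreweras words of length `3 * n`:
`evac* = (τ_{3n-1} ∘ ⋯ ∘ τ_1) ∘ (τ_{3n-1} ∘ ⋯ ∘ τ_2) ∘ ⋯ ∘ (τ_{3n-1})`. -/
noncomputable def evacStar (n : ℕ) (w : List KLetter) : List KLetter :=
  evacStarAux n (3 * n - 1) w

/-- The three-element "V"-shaped poset: `a < b`, `a < c`, with `b`, `c` incomparable. -/
inductive VP : Type
  | a | b | c
deriving DecidableEq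

instance : PartialOrder VP where
  le x y := x = y ∨ x = VP.a
  le_refl x := Or.inl rfl
  le_trans x y z hxy hyz := by
    rcases hxy with rfl | rfl
    · exact hyz
    · exact Or.inr rfl
  le_antisymm x y hxy hyx := by
    rcases hxy with rfl | rfl
    · rfl
    · rcases hyx with rfl | rfl <;> rfl

/-- The labeling of elements of `V(n) = VP × Fin n` by letters. -/
def vlabel {n : ℕ} (p : VP × Fin n) : KLetter :=
  match p.1 with
  | VP.a => A
  | VP.b => B
  | VP.c => C

/-- `L` is a linear extension of `V(n) = VP × Fin n` (with the product order):
a list of all elements of `V(n)`, each appearing once, such that `L_i ≤ L_j`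
implies `i ≤ j`. -/
def IsLinearExtension (n : ℕ) (L : List (VP × Fin n)) : Prop :=
  L.Nodup ∧ (∀ p : VP × Fin n, p ∈ L) ∧
  ∀ i j : Fin L.length, L.get i ≤ L.get j → (i : ℕ) ≤ (j : ℕ)

/-- A connected Kreweras word: a Kreweras word of length `3 * n` having no proper
nonempty consecutive substring which is itself a Kreweras word. -/
def ConnectedKrewerasWord (n : ℕ) (w : List KLetter) : Prop :=
  IsKrewerasWord n w ∧
  ∀ (u : List KLetter) (m : ℕ), u <:+: w → u ≠ [] → u ≠ w → ¬ IsKrewerasWord m u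


namespace KW
open MvPowerSeries

/-- the abstract properties of the count of prefixes -/
structure IsN (N : ℕ → ℕ → ℕ → ℚ) : Prop where
  zero : N 0 0 0 = 1
  gtb : ∀ a b c, a < b → N a b c = 0
  gtc : ∀ a b c, a < c → N a b c = 0
  symm : ∀ a b c, N a b c = N a c b
  step : ∀ a b c, b ≤ a → c ≤ a → 0 < a + b + c → N a b c =
    (if 1 ≤ a then N (a-1) b c else 0) + (if 1 ≤ b then N a (b-1) c else 0)
      + (if 1 ≤ c then N a b (c-1) else 0)

noncomputable def Qs (N : ℕ → ℕ → ℕ → ℚ) : MvPowerSeries (Fin 3) ℚ :=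
  fun e => N (e 0 + e 1) (e 2) (e 1)
noncomputable def Qac (N : ℕ → ℕ → ℕ → ℚ) : MvPowerSeries (Fin 3) ℚ :=
  fun e => if e 0 = 0 then N (e 1) (e 2) (e 1) else 0
noncomputable def Qab (N : ℕ → ℕ → ℕ → ℚ) : MvPowerSeries (Fin 3) ℚ :=
  fun e => if e 2 = e 0 + e 1 then N (e 2) (e 2) (e 1) else 0
noncomputable def Rs (N : ℕ → ℕ → ℕ → ℚ) : MvPowerSeries (Fin 2) ℚ :=
  fun e => N (e 1 + e 0) (e 1) (e 1 + e 0)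

lemma coeff_X_mul' {σ : Type*} [DecidableEq σ] (s : σ) (f : MvPowerSeries σ ℚ) (e : σ →₀ ℕ) :
    coeff e (X s * f) = if 1 ≤ e s then coeff (e - Finsupp.single s 1) f else 0 := by
  rw [X, coeff_monomial_mul]
  simp [Finsupp.single_le_iff]

lemma func_eq {N} (h : IsN N) :
    X 0 * (Qs N - X 0 * Qs N - X 2 * Qs N) - X 1 * Qs N + X 0 * (X 2 * Qab N) + X 1 * Qac N
      = X 0 := by
  ext e
  obtain ⟨i, hi⟩ : ∃ i, e 0 = i := ⟨_, rfl⟩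
  obtain ⟨c, hc⟩ : ∃ i, e 1 = i := ⟨_, rfl⟩
  obtain ⟨b, hb⟩ : ∃ i, e 2 = i := ⟨_, rfl⟩
  have hX : coeff e (X 0 : MvPowerSeries (Fin 3) ℚ) = if i = 1 ∧ c = 0 ∧ b = 0 then 1 else 0 := by
    rw [coeff_X]
    congr 1
    rw [Finsupp.ext_iff]
    simp [Fin.forall_fin_succ, hi, hb, hc]
  have cQ : ∀ e, coeff e (Qs N) = N (e 0 + e 1) (e 2) (e 1) := fun e => rfl
  have cab : ∀ e, coeff e (Qab N) = if e 2 = e 0 + e 1 then N (e 2) (e 2) (e 1) else 0 :=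
    fun e => rfl
  have cac : ∀ e, coeff e (Qac N) = if e 0 = 0 then N (e 1) (e 2) (e 1) else 0 := fun e => rfl
  rw [hX]
  simp only [map_add, map_sub, coeff_X_mul', cQ, cab, cac]
  simp [hi, hb, hc]
  rcases i with _ | j
  · simp
  · have h0 := h.zero
    have h1 := h.gtb
    have h2 := h.gtc
    have hA : (if 1 ≤ j then N (j - 1 + c) b c else 0) =
        (if 1 ≤ j + c then N (j + c - 1) b c else 0) := by
      rcases j with _ | j
      · rcases c with _ | c
        · simp
        · simp [h2 c b (c+1) (by omega)]
      · have : j + 1 + c - 1 = j + c := by omega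
        simp [this]
    have hC : (if 1 ≤ c then N (j + 1 + (c - 1)) b (c - 1) else 0) =
        (if 1 ≤ c then N (j + c) b (c - 1) else 0) := by
      split_ifs with hc1
      · congr 1; omega
      · rfl
    simp only [Nat.add_sub_cancel, hC, hA]
    by_cases hba : b ≤ j + c
    · by_cases hz : 0 < (j + c) + b + c
      · have h3 := h.step (j+c) b c hba (by omega) hz
        have h4 : ¬ (b - 1 = j + c ∧ 1 ≤ b) := by omega
        have h5 : ¬ (j = 0 ∧ c = 0 ∧ b = 0) := by omega
        have h6 : (if 1 ≤ b then if b - 1 = j + c then N (b - 1) (b - 1) c else 0 else 0) = 0 := by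
          split_ifs <;> first | rfl | omega
        simp [h5, h6]
        rw [h3]
        ring
      · obtain ⟨rfl, rfl, rfl⟩ : j = 0 ∧ b = 0 ∧ c = 0 := by omega
        simp [h0]
    · have g1 : N (j + c - 1) b c = 0 := h1 _ _ _ (by omega)
      have g2 : N (j + c) b c = 0 := h1 _ _ _ (by omega)
      have g3 : N (j + c) b (c - 1) = 0 := h1 _ _ _ (by omega)
      have g4 : ¬ (j = 0 ∧ c = 0 ∧ b = 0) := by omega
      have g5 : 1 ≤ b := by omega
      simp [g1, g2, g3, g4, g5]
      by_cases g6 : b - 1 = j + c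
      · simp [g6]
      · have : N (j + c) (b - 1) c = 0 := h1 _ _ _ (by omega)
        simp [this, g6]

lemma subst_mono (f : MvPowerSeries (Fin 2) ℚ) (u v : Fin 3 →₀ ℕ) (hu : u ≠ 0) (hv : v ≠ 0)
    (e : Fin 3 →₀ ℕ) : coeff e (subst ![monomial u (1:ℚ), monomial v (1:ℚ)] f)
      = ∑ᶠ d : Fin 2 →₀ ℕ, if e = d 0 • u + d 1 • v then coeff d f else 0 := by
  rw [coeff_subst]
  · apply finsum_congr
    intro d
    rw [Finsupp.prod_fintype _ _ (by simp)]
    simp [Fin.prod_univ_two, monomial_pow, monomial_mul_monomial, coeff_monomial]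
  · apply hasSubst_of_constantCoeff_zero
    intro s
    fin_cases s
    · simp [← coeff_zero_eq_constantCoeff_apply, coeff_monomial, hu.symm]
    · simp [← coeff_zero_eq_constantCoeff_apply, coeff_monomial, hv.symm]

lemma Qac_eq {N} (h : IsN N) : Qac N = subst ![X 1, X 1 * X 2] (Rs N) := by
  ext e
  have := subst_mono (Rs N) (Finsupp.single 1 1) (Finsupp.single 1 1 + Finsupp.single 2 1)
    (by simp) (by simp) e
  rw [show (![X 1, X 1 * X 2] : Fin 2 → MvPowerSeries (Fin 3) ℚ) = ![monomial (Finsupp.single 1 1) 1,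
    monomial (Finsupp.single 1 1 + Finsupp.single 2 1) 1] by
      simp [X, monomial_mul_monomial], this]
  change (if e 0 = 0 then N (e 1) (e 2) (e 1) else 0) = _
  rw [finsum_eq_single _ (Finsupp.equivFunOnFinite.symm ![e 1 - e 2, e 2])]
  · simp only [Finsupp.ext_iff]
    change _ = if _ then N _ _ _ else 0
    simp [Fin.forall_fin_succ]
    by_cases h1 : e 2 ≤ e 1
    · simp [h1]
    · simp [h.gtb (e 1) (e 2) (e 1) (by omega)]
      intro _ _ ; omega
  · intro d hd
    rw [if_neg]
    rintro rfl
    apply hd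
    ext i
    fin_cases i <;> simp

lemma Qab_eq {N} (h : IsN N) : Qab N = subst ![X 0 * X 2, X 1 * X 2] (Rs N) := by
  ext e
  have := subst_mono (Rs N) (Finsupp.single 0 1 + Finsupp.single 2 1)
    (Finsupp.single 1 1 + Finsupp.single 2 1)
    (by simp) (by simp) e
  rw [show (![X 0 * X 2, X 1 * X 2] : Fin 2 → MvPowerSeries (Fin 3) ℚ) =
    ![monomial (Finsupp.single 0 1 + Finsupp.single 2 1) 1,
    monomial (Finsupp.single 1 1 + Finsupp.single 2 1) 1] by
      simp [X, monomial_mul_monomial], this]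
  change (if e 2 = e 0 + e 1 then N (e 2) (e 2) (e 1) else 0) = _
  rw [finsum_eq_single _ (Finsupp.equivFunOnFinite.symm ![e 0, e 1])]
  · simp only [Finsupp.ext_iff]
    change _ = if _ then N _ _ _ else 0
    simp [Fin.forall_fin_succ]
    by_cases h1 : e 2 = e 0 + e 1
    · simp [h1]
      rw [h.symm, add_comm]
    · simp [h1]
  · intro d hd
    rw [if_neg]
    rintro rfl
    apply hd
    ext i
    fin_cases i <;> simp

/-- The functional equation after substitution. -/
lemma func_subst {N} (h : IsN N) {τ : Type*} (al x be : MvPowerSeries τ ℚ)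
    (h0 : constantCoeff al = 0) (h1 : constantCoeff x = 0) (h2 : constantCoeff be = 0)
    (hk : al * (1 - al - be) = x) :
    al * be * subst ![al * be, x * be] (Rs N) + x * subst ![x, x * be] (Rs N) = al := by
  have hs : HasSubst ![al, x, be] := by
    apply hasSubst_of_constantCoeff_zero
    intro s; fin_cases s <;> simp [h0, h1, h2]
  have := congrArg (subst ![al, x, be]) (func_eq h)
  rw [Qab_eq h, Qac_eq h] at this
  simp only [← substAlgHom_apply hs, map_add, map_sub, map_mul] at this
  simp only [substAlgHom_apply, subst_X hs] at this
  rw [subst_comp_subst_apply _ hs, subst_comp_subst_apply _ hs] at this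
  · have e1 : (fun s : Fin 2 => subst ![al, x, be] ((![X 0 * X 2, X 1 * X 2] : Fin 2 → MvPowerSeries (Fin 3) ℚ) s)) = ![al * be, x * be] := by
      ext s : 1
      fin_cases s <;> simp [subst_mul hs, subst_X hs]
    have e2 : (fun s : Fin 2 => subst ![al, x, be] ((![X 1, X 1 * X 2] : Fin 2 → MvPowerSeries (Fin 3) ℚ) s)) = ![x, x * be] := by
      ext s : 1
      fin_cases s <;> simp [subst_mul hs, subst_X hs]
    rw [e1, e2] at this
    simp at this
    linear_combination this - subst ![al, x, be] (Qs N) * hk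
  · apply hasSubst_of_constantCoeff_zero
    intro s; fin_cases s <;> simp
  · apply hasSubst_of_constantCoeff_zero
    intro s; fin_cases s <;> simp

lemma X1_dvd_of_subst (F : MvPowerSeries (Fin 2) ℚ)
    (hF : subst ![X 0, (0 : MvPowerSeries (Fin 2) ℚ)] F = 0) : X 1 ∣ F := by
  rw [X_dvd_iff]
  intro m hm
  have hs : HasSubst ![X 0, (0 : MvPowerSeries (Fin 2) ℚ)] := HasSubst.X_zero
  have := congrArg (coeff m) hF
  rw [coeff_subst hs, finsum_eq_single _ m] at this
  · rw [Finsupp.prod_fintype _ _ (by simp)] at this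
    simp [Fin.prod_univ_two, hm, X_pow_eq, coeff_monomial] at this
    apply this
    ext i; fin_cases i <;> simp [hm]
  · intro d hd
    rw [Finsupp.prod_fintype _ _ (by simp)]
    simp only [Fin.prod_univ_two]
    by_cases h1 : d 1 = 0
    · simp [h1, X_pow_eq, coeff_monomial]
      rintro rfl
      exfalso
      apply hd
      ext i; fin_cases i <;> simp [h1]
    · simp [h1]

lemma cc2 {τ : Type*} : constantCoeff (2 : MvPowerSeries τ ℚ) = 2 := map_ofNat _ 2

lemma kernel_uniq (E bp : MvPowerSeries (Fin 2) ℚ) (hbp : bp ≠ 0)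
    (hE : (2 - X 0) * subst ![X 0, X 1 * bp] E
      + X 1 * ((2 - X 0 * X 1) * subst ![X 0 * X 1, X 1 * bp] E) = 0) : E = 0 := by
  have hs1 : HasSubst ![X 0, X 1 * bp] := by
    apply hasSubst_of_constantCoeff_zero
    intro s; fin_cases s <;> simp
  have hs2 : HasSubst ![X 0 * X 1, X 1 * bp] := by
    apply hasSubst_of_constantCoeff_zero
    intro s; fin_cases s <;> simp
  have hs3 : HasSubst ![X 0, (0 : MvPowerSeries (Fin 2) ℚ)] := HasSubst.X_zero
  have h2 : (2 - X 0 : MvPowerSeries (Fin 2) ℚ) ≠ 0 := by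
    intro h
    have := congrArg constantCoeff h
    simp [cc2] at this
  have hb : X 1 * bp ≠ 0 := mul_ne_zero (by intro h; simpa using congrArg (coeff (Finsupp.single 1 1)) h) hbp
  have key : ∀ m : ℕ, ∃ F, E = X 1 ^ m * F ∧ (2 - X 0) * subst ![X 0, X 1 * bp] F
      + X 1 * ((2 - X 0 * X 1) * subst ![X 0 * X 1, X 1 * bp] F) = 0 := by
    intro m
    induction m with
    | zero => exact ⟨E, by simp, hE⟩
    | succ m ih =>
      obtain ⟨F, hF, h⟩ := ih
      have hd : X 1 ∣ F := by
        apply X1_dvd_of_subst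
        have h' := congrArg (substAlgHom (R := ℚ) hs3) h
        simp only [map_add, map_sub, map_mul, map_ofNat, map_zero] at h'
        simp only [substAlgHom_apply, subst_X hs3] at h'
        rw [subst_comp_subst_apply hs1 hs3] at h'
        have e2 : (fun s : Fin 2 => subst ![X 0, (0 : MvPowerSeries (Fin 2) ℚ)] ((![X 0, X 1 * bp] : Fin 2 → MvPowerSeries (Fin 2) ℚ) s)) = ![X 0, 0] := by
          ext s : 1
          fin_cases s <;> simp [subst_mul hs3, subst_X hs3]
        rw [e2] at h'
        simpa [h2] using h'
      obtain ⟨G, rfl⟩ := hd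
      refine ⟨G, by rw [hF]; ring, ?_⟩
      rw [subst_mul hs1, subst_mul hs2, subst_X hs1, subst_X hs2] at h
      apply mul_left_cancel₀ hb
      simp at h
      linear_combination h
  ext e
  obtain ⟨F, hF, -⟩ := key (e 1 + 1)
  have : X 1 ^ (e 1 + 1) ∣ E := ⟨F, hF⟩
  rw [X_pow_dvd_iff] at this
  simpa using this e (by omega)

/-- Closed form of the boundary generating function along the parametrisation. -/
lemma Rs_closed {N} (hN : IsN N) (g h : MvPowerSeries (Fin 2) ℚ) (hg : (2 + X 1) * g = 1)
    (hh : (2 - X 0) * h = 1) :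
    subst ![X 0 * (2 - X 0) * g ^ 2, X 1 * g ^ 3] (Rs N) =
      (2 + X 1) * h * (1 - MvPowerSeries.C (1/2) * X 1 * h) := by
  rw [← sub_eq_zero]
  obtain ⟨di, hdi⟩ : ∃ di : MvPowerSeries (Fin 2) ℚ, (1 + X 1 - X 0 * X 1) * di = 1 :=
    ⟨_, MvPowerSeries.mul_inv_cancel _ (by simp)⟩
  have hdi0 : di ≠ 0 := by rintro rfl; simp at hdi
  have hX0 : (X 0 : MvPowerSeries (Fin 2) ℚ) ≠ 0 := by
    intro h; simpa using congrArg (coeff (Finsupp.single 0 1)) h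
  have h2a : (2 - X 0 : MvPowerSeries (Fin 2) ℚ) ≠ 0 := by
    intro h; simpa [cc2] using congrArg constantCoeff h
  have h2b : (2 - X 0 * X 1 : MvPowerSeries (Fin 2) ℚ) ≠ 0 := by
    intro h; simpa [cc2] using congrArg constantCoeff h
  obtain ⟨bp, hbp⟩ : ∃ bp : MvPowerSeries (Fin 2) ℚ,
    bp = X 0 * (2 - X 0) * (2 - X 0 * X 1) * di := ⟨_, rfl⟩
  have hbp0 : bp ≠ 0 := by
    rw [hbp]
    exact mul_ne_zero (mul_ne_zero (mul_ne_zero hX0 h2a) h2b) hdi0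
  apply kernel_uniq _ bp hbp0
  have hs1 : HasSubst ![X 0, X 1 * bp] := by
    apply hasSubst_of_constantCoeff_zero
    intro s; fin_cases s <;> simp
  have hs2 : HasSubst ![X 0 * X 1, X 1 * bp] := by
    apply hasSubst_of_constantCoeff_zero
    intro s; fin_cases s <;> simp
  have hsA : HasSubst ![X 0 * (2 - X 0) * g ^ 2, X 1 * g ^ 3] := by
    apply hasSubst_of_constantCoeff_zero
    intro s; fin_cases s <;> simp
  obtain ⟨k, hk⟩ : ∃ k : MvPowerSeries (Fin 2) ℚ, (2 + X 1 * bp) * k = 1 :=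
    ⟨_, MvPowerSeries.mul_inv_cancel _ (by simp [cc2])⟩
  have s1g : subst ![X 0, X 1 * bp] g = k := by
    have := congrArg (substAlgHom (R := ℚ) hs1) hg
    simp only [map_add, map_mul, map_ofNat, map_one] at this
    simp only [substAlgHom_apply, subst_X hs1] at this
    simp at this
    linear_combination k * this - subst ![X 0, X 1 * bp] g * hk
  have s2g : subst ![X 0 * X 1, X 1 * bp] g = k := by
    have := congrArg (substAlgHom (R := ℚ) hs2) hg
    simp only [map_add, map_mul, map_ofNat, map_one] at this
    simp only [substAlgHom_apply, subst_X hs2] at this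
    simp at this
    linear_combination k * this - subst ![X 0 * X 1, X 1 * bp] g * hk
  obtain ⟨h1, hh1⟩ : ∃ h1, h1 = subst ![X 0, X 1 * bp] h := ⟨_, rfl⟩
  obtain ⟨h2, hh2⟩ : ∃ h2, h2 = subst ![X 0 * X 1, X 1 * bp] h := ⟨_, rfl⟩
  have s1h : (2 - X 0) * h1 = 1 := by
    have := congrArg (substAlgHom (R := ℚ) hs1) hh
    simp only [map_sub, map_mul, map_ofNat, map_one] at this
    simp only [substAlgHom_apply, subst_X hs1] at this
    simpa [hh1] using this
  have s2h : (2 - X 0 * X 1) * h2 = 1 := by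
    have := congrArg (substAlgHom (R := ℚ) hs2) hh
    simp only [map_sub, map_mul, map_ofNat, map_one] at this
    simp only [substAlgHom_apply, subst_X hs2] at this
    simpa [hh2] using this
  have fe := func_subst hN (X 0 * (1 + X 1 - X 0 * X 1) * k) (X 0 * (2 - X 0) * k ^ 2)
    (X 1 * (2 - X 0 * X 1) * di * k) (by simp) (by simp) (by simp) (by
      have h3 : (1 + X 1 - X 0 * X 1) * ((2 + X 1 * bp) - X 0 * (1 + X 1 - X 0 * X 1)
          - X 1 * (2 - X 0 * X 1) * di) = 2 - X 0 := by
        rw [hbp]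
        linear_combination (X 1 * X 0 * (2 - X 0) * (2 - X 0 * X 1) - X 1 * (2 - X 0 * X 1)) * hdi
      linear_combination X 0 * k ^ 2 * h3 - X 0 * (1 + X 1 - X 0 * X 1) * k * hk)
  have hC : subst ![X 0, X 1 * bp] (MvPowerSeries.C (1/2) : MvPowerSeries (Fin 2) ℚ) = MvPowerSeries.C (1/2) := subst_C _
  have hC' : subst ![X 0 * X 1, X 1 * bp] (MvPowerSeries.C (1/2) : MvPowerSeries (Fin 2) ℚ) = MvPowerSeries.C (1/2) :=
    subst_C _
  have hhalf : (MvPowerSeries.C (1/2) : MvPowerSeries (Fin 2) ℚ) * 2 = 1 := by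
    rw [show (2 : MvPowerSeries (Fin 2) ℚ) = MvPowerSeries.C 2 from (map_ofNat MvPowerSeries.C 2).symm, ← map_mul]
    norm_num
  simp only [← substAlgHom_apply hs1, ← substAlgHom_apply hs2]
  simp only [map_sub, map_mul, map_ofNat, map_one, map_add]
  simp only [substAlgHom_apply, subst_X hs1, subst_X hs2, hC, hC', ← hh1, ← hh2]
  rw [subst_comp_subst_apply hsA hs1, subst_comp_subst_apply hsA hs2]
  have a1 : (fun s : Fin 2 => subst ![X 0, X 1 * bp] ((![X 0 * (2 - X 0) * g ^ 2, X 1 * g ^ 3] :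
      Fin 2 → MvPowerSeries (Fin 2) ℚ) s)) = ![X 0 * (2 - X 0) * k ^ 2, X 1 * bp * k ^ 3] := by
    ext s : 1
    simp only [← substAlgHom_apply hs1]
    fin_cases s <;>
    simp only [Fin.zero_eta, Fin.isValue, Matrix.cons_val_zero, Matrix.cons_val_one, Fin.mk_one,
      map_sub, map_mul, map_ofNat, map_pow] <;>
    simp [substAlgHom_apply, subst_X hs1, s1g]
  have a2 : (fun s : Fin 2 => subst ![X 0 * X 1, X 1 * bp] ((![X 0 * (2 - X 0) * g ^ 2, X 1 * g ^ 3] :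
      Fin 2 → MvPowerSeries (Fin 2) ℚ) s)) = ![X 0 * X 1 * (2 - X 0 * X 1) * k ^ 2, X 1 * bp * k ^ 3] := by
    ext s : 1
    simp only [← substAlgHom_apply hs2]
    fin_cases s <;>
    simp only [Fin.zero_eta, Fin.isValue, Matrix.cons_val_zero, Matrix.cons_val_one, Fin.mk_one,
      map_sub, map_mul, map_ofNat, map_pow] <;>
    simp [substAlgHom_apply, subst_X hs2, s2g]
  rw [a1, a2]
  have f1 : X 0 * (1 + X 1 - X 0 * X 1) * k * (X 1 * (2 - X 0 * X 1) * di * k) =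
      X 0 * X 1 * (2 - X 0 * X 1) * k ^ 2 := by
    linear_combination (X 0 * X 1 * (2 - X 0 * X 1) * k ^ 2) * hdi
  have f2 : X 0 * (2 - X 0) * k ^ 2 * (X 1 * (2 - X 0 * X 1) * di * k) = X 1 * bp * k ^ 3 := by
    rw [hbp]; ring
  rw [f1, f2] at fe
  obtain ⟨S1, hS1⟩ : ∃ S, S = subst ![X 0 * (2 - X 0) * k ^ 2, X 1 * bp * k ^ 3] (Rs N) := ⟨_, rfl⟩
  obtain ⟨S2, hS2⟩ : ∃ S, S = subst ![X 0 * X 1 * (2 - X 0 * X 1) * k ^ 2, X 1 * bp * k ^ 3] (Rs N) :=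
    ⟨_, rfl⟩
  rw [← hS1, ← hS2] at fe ⊢
  simp only [Matrix.cons_val_zero, Matrix.cons_val_one]
  generalize hm : 2 + X 1 * bp = m at *
  generalize (MvPowerSeries.C (1/2) : MvPowerSeries (Fin 2) ℚ) = c at *
  generalize (X 0 : MvPowerSeries (Fin 2) ℚ) = p at *
  generalize (X 1 : MvPowerSeries (Fin 2) ℚ) = v at *
  have e1 : p * v * (2 - p * v) * S2 + p * (2 - p) * S1 = p * (1 + v - p * v) * m := by
    linear_combination m ^ 2 * fe - (p * v * (2 - p * v) * S2 + p * (2 - p) * S1) * (m * k + 1) * hk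
      + p * (1 + v - p * v) * m * hk
  have e2 : bp * h1 = p * (2 - p * v) * di := by
    rw [hbp]; linear_combination p * (2 - p * v) * di * s1h
  have e3 : bp * h2 = p * (2 - p) * di := by
    rw [hbp]; linear_combination p * (2 - p) * di * s2h
  apply mul_left_cancel₀ hX0
  linear_combination e1 - m * p * (1 - c * v * bp * h1) * s1h
    - m * p * v * (1 - c * v * bp * h2) * s2h + m * p * c * v * e2 + m * p * v * c * v * e3
    + m * v * p ^ 2 * (c * 2) * hdi + m * v * p ^ 2 * hhalf
end KW

namespace KW
open MvPowerSeries

lemma Rs_zero {N} (hN : IsN N) {τ : Type*} (b k : MvPowerSeries τ ℚ) (hb : constantCoeff b = 0)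
    (hk : (2 + b) * k = 1) : subst ![0, b * k ^ 3] (Rs N) =
      (2 + b) * MvPowerSeries.C (1/2) * (1 - MvPowerSeries.C (1/4) * b) := by
  obtain ⟨g, hg⟩ : ∃ g : MvPowerSeries (Fin 2) ℚ, (2 + X 1) * g = 1 :=
    ⟨_, MvPowerSeries.mul_inv_cancel _ (by simp [cc2])⟩
  obtain ⟨h, hh⟩ : ∃ h : MvPowerSeries (Fin 2) ℚ, (2 - X 0) * h = 1 :=
    ⟨_, MvPowerSeries.mul_inv_cancel _ (by simp [cc2])⟩
  have hs : HasSubst ![0, b] := by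
    apply hasSubst_of_constantCoeff_zero
    intro s; fin_cases s <;> simp [hb]
  have hsA : HasSubst ![X 0 * (2 - X 0) * g ^ 2, X 1 * g ^ 3] := by
    apply hasSubst_of_constantCoeff_zero
    intro s; fin_cases s <;> simp
  have hhalf : (MvPowerSeries.C (1/2) : MvPowerSeries τ ℚ) * 2 = 1 := by
    rw [show (2 : MvPowerSeries τ ℚ) = MvPowerSeries.C 2 from (map_ofNat MvPowerSeries.C 2).symm, ← map_mul]
    norm_num
  have hC : subst ![0, b] (MvPowerSeries.C (1/2) : MvPowerSeries (Fin 2) ℚ) = MvPowerSeries.C (1/2) := subst_C _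
  have hg' : subst ![0, b] g = k := by
    have := congrArg (substAlgHom (R := ℚ) hs) hg
    simp only [map_add, map_mul, map_ofNat, map_one] at this
    simp only [substAlgHom_apply, subst_X hs] at this
    simp at this
    linear_combination k * this - subst ![0, b] g * hk
  have hh' : subst ![0, b] h = MvPowerSeries.C (1/2) := by
    have := congrArg (substAlgHom (R := ℚ) hs) hh
    simp only [map_sub, map_mul, map_ofNat, map_one] at this
    simp only [substAlgHom_apply, subst_X hs] at this
    simp only [Matrix.cons_val_zero, sub_zero] at this
    linear_combination MvPowerSeries.C (1/2) * this - subst ![0, b] h * hhalf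
  have key := congrArg (substAlgHom (R := ℚ) hs) (Rs_closed hN g h hg hh)
  simp only [map_sub, map_mul, map_ofNat, map_one, map_add] at key
  simp only [substAlgHom_apply, subst_X hs, hC, hh'] at key
  rw [subst_comp_subst_apply hsA hs] at key
  have a1 : (fun s : Fin 2 => subst ![0, b] ((![X 0 * (2 - X 0) * g ^ 2, X 1 * g ^ 3] :
      Fin 2 → MvPowerSeries (Fin 2) ℚ) s)) = ![0, b * k ^ 3] := by
    ext s : 1
    simp only [← substAlgHom_apply hs]
    fin_cases s <;>
    simp only [Fin.zero_eta, Fin.isValue, Matrix.cons_val_zero, Matrix.cons_val_one, Fin.mk_one,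
      map_sub, map_mul, map_ofNat, map_pow] <;>
    simp [substAlgHom_apply, subst_X hs, hg']
  rw [a1] at key
  rw [key]
  have : (MvPowerSeries.C (1/4) : MvPowerSeries τ ℚ) = MvPowerSeries.C (1/2) * MvPowerSeries.C (1/2) := by
    rw [← map_mul]; norm_num
  rw [this]
  simp only [Matrix.cons_val_one, Matrix.cons_val_fin_one]
  ring

/-- length generating function of the balanced words -/
noncomputable def Kx (N : ℕ → ℕ → ℕ → ℚ) : PowerSeries ℚ :=
  PowerSeries.mk fun l => if 3 ∣ l then N (l/3) (l/3) (l/3) else 0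

lemma Kx_eq (N : ℕ → ℕ → ℕ → ℚ) :
    Kx N = subst ![0, (PowerSeries.X ^ 3 : PowerSeries ℚ)] (Rs N) := by
  have hs : HasSubst ![0, (PowerSeries.X ^ 3 : MvPowerSeries Unit ℚ)] := by
    apply hasSubst_of_constantCoeff_zero
    intro s; fin_cases s
    · simp
    · change constantCoeff (PowerSeries.X ^ 3 : PowerSeries ℚ) = 0
      exact (by simp : PowerSeries.constantCoeff (PowerSeries.X ^ 3 : PowerSeries ℚ) = 0)
  ext l
  change _ = coeff _ (subst _ _)
  rw [coeff_subst hs, finsum_eq_single _ (Finsupp.single 1 (l/3))]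
  · simp only [Kx, PowerSeries.coeff_mk]
    change _ = N _ _ _ • PowerSeries.coeff l _
    simp [← pow_mul, PowerSeries.coeff_X_pow]
    congr 1
    rw [eq_iff_iff]; omega
  · intro d hd
    rw [Finsupp.prod_fintype _ _ (by simp)]
    simp only [Fin.prod_univ_two]
    by_cases h1 : d 0 = 0
    · change _ • PowerSeries.coeff l _ = _
      simp [h1, ← pow_mul, PowerSeries.coeff_X_pow]
      intro h
      exfalso
      apply hd
      ext i; fin_cases i
      · simp [h1]
      · simp; omega
    · simp [h1]

lemma Kx_closed {N} (hN : IsN N) (g : PowerSeries ℚ) (hg : (2 + PowerSeries.X ^ 3) * g = 1) :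
    (Kx N).subst (PowerSeries.X * g : PowerSeries ℚ) =
      (2 + PowerSeries.X ^ 3) * PowerSeries.C (1/2) * (1 - PowerSeries.C (1/4) * PowerSeries.X ^ 3) := by
  have h1 := Rs_zero hN (τ := Unit) (PowerSeries.X ^ 3 : PowerSeries ℚ) g
    (by exact (by simp : PowerSeries.constantCoeff (PowerSeries.X ^ 3 : PowerSeries ℚ) = 0)) hg
  refine Eq.trans ?_ h1
  rw [Kx_eq, PowerSeries.subst_def]
  have hs : HasSubst ![0, (PowerSeries.X ^ 3 : MvPowerSeries Unit ℚ)] := by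
    apply hasSubst_of_constantCoeff_zero
    intro s; fin_cases s
    · simp
    · change constantCoeff (PowerSeries.X ^ 3 : PowerSeries ℚ) = 0
      exact (by simp : PowerSeries.constantCoeff (PowerSeries.X ^ 3 : PowerSeries ℚ) = 0)
  have hx : PowerSeries.HasSubst (PowerSeries.X * g : PowerSeries ℚ) :=
    PowerSeries.HasSubst.of_constantCoeff_zero' (by simp)
  rw [subst_comp_subst_apply hs hx.const]
  congr 1
  ext s : 1
  fin_cases s
  · change subst _ (0 : MvPowerSeries Unit ℚ) = 0
    rw [← substAlgHom_apply hx.const]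
    exact map_zero _
  · change PowerSeries.subst _ (PowerSeries.X ^ 3 : PowerSeries ℚ) = _
    rw [PowerSeries.subst_pow hx, PowerSeries.subst_X hx]
    exact mul_pow _ _ _
end KW
namespace KW
open PowerSeries

lemma lag_lt (phi psi : PowerSeries ℚ) (h : phi * psi = 1) (k j : ℕ) (hj : 1 ≤ j) :
    coeff (k + j) (derivative ℚ ((X * phi) ^ (k+1)) * psi ^ (k + 1 + j)) = 0 := by
  have hd : derivative ℚ psi = - psi ^ 2 * derivative ℚ phi := by
    have := congrArg (derivative ℚ) h
    simp only [Derivation.leibniz, smul_eq_mul, Derivation.map_one_eq_zero] at this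
    linear_combination psi * this - derivative ℚ psi * h
  obtain ⟨i, rfl⟩ : ∃ i, j = i + 1 := ⟨j - 1, by omega⟩
  have e1 : derivative ℚ ((X * phi) ^ (k+1)) * psi ^ (k + 1 + (i + 1)) =
      X ^ k * (((k:ℚ) + 1) • (psi ^ (i+1) - X * (psi ^ i * derivative ℚ psi))) := by
    have hp : phi ^ k * psi ^ k = 1 := by rw [← mul_pow, h, one_pow]
    rw [Derivation.leibniz_pow, Derivation.leibniz, derivative_X, hd]
    simp only [smul_eq_mul, nsmul_eq_mul, Nat.add_sub_cancel, Algebra.smul_def]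
    simp
    rw [mul_pow]
    linear_combination X ^ k * ((k:PowerSeries ℚ) + 1) * (phi + X * derivative ℚ phi) * psi ^ (i+2) * hp
      + X ^ k * ((k:PowerSeries ℚ) + 1) * psi ^ (i + 1) * h
  rw [e1, add_comm k, coeff_X_pow_mul, coeff_smul]
  have e2 : ((i:ℚ)+1) • (psi ^ i * derivative ℚ psi) = derivative ℚ (psi ^ (i+1)) := by
    rw [Derivation.leibniz_pow]
    simp only [smul_eq_mul, nsmul_eq_mul, Nat.add_sub_cancel, Algebra.smul_def]
    simp
  have e3 := congrArg (coeff i) e2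
  rw [coeff_smul, coeff_derivative, smul_eq_mul] at e3
  have : ((i:ℚ)+1) ≠ 0 := by positivity
  have e4 : coeff i (psi ^ i * derivative ℚ psi) = coeff (i+1) (psi ^ (i+1)) := by
    apply mul_left_cancel₀ this
    rw [e3]; ring
  rw [map_sub, coeff_succ_X_mul, e4]
  simp

lemma lag_eq (phi psi : PowerSeries ℚ) (h : phi * psi = 1) (k : ℕ) :
    coeff k (derivative ℚ ((X * phi) ^ (k+1)) * psi ^ (k + 1)) = k + 1 := by
  have e1 : derivative ℚ ((X * phi) ^ (k+1)) * psi ^ (k + 1) =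
      X ^ k * (((k:ℚ) + 1) • (1 + X * (psi * derivative ℚ phi))) := by
    have hp : phi ^ k * psi ^ k = 1 := by rw [← mul_pow, h, one_pow]
    rw [Derivation.leibniz_pow, Derivation.leibniz, derivative_X]
    simp only [smul_eq_mul, nsmul_eq_mul, Nat.add_sub_cancel, Algebra.smul_def]
    simp
    rw [mul_pow]
    linear_combination X ^ k * ((k:PowerSeries ℚ) + 1) * (phi + X * derivative ℚ phi) * psi * hp
      + X ^ k * ((k:PowerSeries ℚ) + 1) * h
  rw [e1]
  have := coeff_X_pow_mul (((k:ℚ) + 1) • (1 + X * (psi * derivative ℚ phi))) k 0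
  rw [zero_add] at this
  rw [this, coeff_smul]
  simp

lemma lag_gt (phi psi G : PowerSeries ℚ) (k : ℕ) :
    coeff k (derivative ℚ ((X * phi) ^ (k+2) * G) * psi ^ (k + 1)) = 0 := by
  apply (X_pow_dvd_iff (n := k+1)).1 _ k (by omega)
  apply Dvd.dvd.mul_right
  rw [Derivation.leibniz, Derivation.leibniz_pow]
  simp only [smul_eq_mul, nsmul_eq_mul]
  rw [mul_pow]
  apply dvd_add
  · exact ⟨X * phi^(k+2) * derivative ℚ G, by ring⟩
  · rw [show k + 2 - 1 = k + 1 by omega, mul_pow]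
    exact ⟨G * ((k + 2 : ℕ) * (phi ^ (k+1) * derivative ℚ (X * phi))), by ring⟩

/-- Lagrange inversion. -/
lemma lagrange (phi psi q c : PowerSeries ℚ) (h : phi * psi = 1)
    (hq : c.subst (X * phi : PowerSeries ℚ) = q) (k : ℕ) :
    (k + 1) * coeff (k + 1) c = coeff k (derivative ℚ q * psi ^ (k+1)) := by
  have hs : HasSubst (X * phi : PowerSeries ℚ) := HasSubst.of_constantCoeff_zero' (by simp)
  obtain ⟨D, hD⟩ : ∃ D, c = (∑ i ∈ Finset.range (k+2), coeff i c • X ^ i) + X ^ (k+2) * D := by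
    have : X ^ (k+2) ∣ c - ∑ i ∈ Finset.range (k+2), coeff i c • X ^ i := by
      rw [X_pow_dvd_iff]
      intro m hm
      simp [coeff_X_pow, hm]
    obtain ⟨D, hD⟩ := this
    exact ⟨D, by rw [← hD]; ring⟩
  have hq2 : q = (∑ i ∈ Finset.range (k+2), coeff i c • (X * phi) ^ i) + (X * phi) ^ (k+2) * D.subst (X * phi : PowerSeries ℚ) := by
    rw [← hq]
    conv_lhs => rw [hD]
    rw [← coe_substAlgHom hs]
    simp only [map_add, map_sum, map_smul, map_mul, map_pow, substAlgHom_X]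
  rw [hq2]
  simp only [map_add, map_sum, add_mul, Finset.sum_mul, Derivation.map_smul]
  rw [lag_gt, add_zero, Finset.sum_range_succ]
  simp only [smul_mul_assoc, coeff_smul]
  rw [lag_eq _ _ h, Finset.sum_eq_zero]
  · simp; ring
  · intro i hi
    rw [Finset.mem_range] at hi
    rcases i with _ | i
    · simp
    · have := lag_lt phi psi h i (k - i) (by omega)
      rw [show i + (k - i) = k by omega, show i + 1 + (k - i) = k + 1 by omega] at this
      rw [this]; simp
end KW
namespace KW
open PowerSeries

lemma coeff_inv_pow (d m : ℕ) (psi : PowerSeries ℚ)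
    (h : (1 - PowerSeries.C (1/4) * PowerSeries.X^3) * psi = 1) :
    coeff m (psi ^ (d+1)) = if 3 ∣ m then (Nat.choose (d + m/3) d : ℚ) * (1/4)^(m/3) else 0 := by
  have hs : HasSubst (X ^ 3 : PowerSeries ℚ) := HasSubst.of_constantCoeff_zero' (by simp)
  have h1 : (mk fun n => (Nat.choose (d + n) d : ℚ)) * (1 - X) ^ (d+1) = 1 := by
    exact mk_add_choose_mul_one_sub_pow_eq_one ℚ d
  have h2 := congrArg (fun p => PowerSeries.subst (X ^ 3 : PowerSeries ℚ) (rescale (1/4:ℚ) p)) h1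
  simp only [map_mul, map_pow, map_sub, map_one, rescale_X] at h2
  rw [← coe_substAlgHom hs] at h2
  simp only [map_mul, map_pow, map_sub, map_one, substAlgHom_X] at h2
  have h3 : substAlgHom hs (PowerSeries.C (1/4:ℚ)) = PowerSeries.C (1/4) := by
    exact (substAlgHom hs).commutes (1/4:ℚ)
  rw [h3] at h2
  have h4 : psi ^ (d+1) = substAlgHom hs (rescale (1/4:ℚ) (mk fun n => (Nat.choose (d + n) d : ℚ))) := by
    have h5 : (1 - PowerSeries.C (1/4) * PowerSeries.X^3) ^ (d+1) * psi ^ (d+1) = 1 := by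
      rw [← mul_pow, h, one_pow]
    calc _ = psi ^ (d+1) * 1 := by ring
      _ = _ := by rw [← h2]; linear_combination (substAlgHom hs (rescale (1/4:ℚ) (mk fun n => (Nat.choose (d + n) d : ℚ)))) * h5
  rw [h4, coe_substAlgHom, coeff_subst_X_pow (by norm_num)]
  split_ifs
  · simp [coeff_rescale]; ring
  · rfl

lemma final {N} (hN : IsN N) (Cc : PowerSeries ℚ) (hC : Kx N = 1 + Cc.subst (X * Kx N : PowerSeries ℚ))
    (n : ℕ) (hn : 1 ≤ n) :
    coeff (3*n) Cc * ((3*n-1).factorial * n.factorial : ℕ) = (2^(n+1) * (4*n-3).factorial : ℕ) := by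
  have c2 : constantCoeff (2 : PowerSeries ℚ) = 2 := map_ofNat (constantCoeff (R := ℚ)) 2
  obtain ⟨g, hg⟩ : ∃ g : PowerSeries ℚ, (2 + X ^ 3) * g = 1 :=
    ⟨_, PowerSeries.mul_inv_cancel _ (by simp [c2])⟩
  have hk := Kx_closed hN g hg
  have hs : HasSubst (X * g : PowerSeries ℚ) := HasSubst.of_constantCoeff_zero' (by simp)
  have hs' : HasSubst (X * Kx N : PowerSeries ℚ) := HasSubst.of_constantCoeff_zero' (by simp)
  have hhalf : (PowerSeries.C (1/2) : PowerSeries ℚ) * 2 = 1 := by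
    rw [show (2 : PowerSeries ℚ) = PowerSeries.C 2 from (map_ofNat PowerSeries.C 2).symm, ← map_mul]
    norm_num
  have hq4 : (PowerSeries.C (1/4) : PowerSeries ℚ) = PowerSeries.C (1/2) * PowerSeries.C (1/2) := by
    rw [← map_mul]; norm_num
  have e := congrArg (substAlgHom hs) hC
  rw [map_add, map_one, coe_substAlgHom hs, subst_comp_subst_apply hs' hs, hk] at e
  have e2 : (X * Kx N : PowerSeries ℚ).subst (X * g : PowerSeries ℚ) = X * (PowerSeries.C (1/2) * (1 - PowerSeries.C (1/4) * X ^ 3)) := by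
    rw [← coe_substAlgHom hs, map_mul, substAlgHom_X, coe_substAlgHom hs, hk]
    linear_combination (X * (PowerSeries.C (1/2) * (1 - PowerSeries.C (1/4) * X ^ 3))) * hg
  rw [e2] at e
  obtain ⟨psi, hpsi⟩ : ∃ g : PowerSeries ℚ, (1 - PowerSeries.C (1/4) * X ^ 3) * g = 1 :=
    ⟨_, PowerSeries.mul_inv_cancel _ (by simp)⟩
  have hl := lagrange (PowerSeries.C (1/2) * (1 - PowerSeries.C (1/4) * X ^ 3)) (2 * psi) (PowerSeries.C (1/4) * X^3 - PowerSeries.C (1/8) * X^6) Cc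
    (by linear_combination PowerSeries.C (1/2) * 2 * hpsi + hhalf)
    (by 
      have h8 : (PowerSeries.C (1/8) : PowerSeries ℚ) = PowerSeries.C (1/2) * PowerSeries.C (1/2) * PowerSeries.C (1/2) := by
        rw [← map_mul, ← map_mul]; norm_num
      rw [hq4] at e ⊢
      rw [h8]
      linear_combination - e + (1 - PowerSeries.C (1/2) * PowerSeries.C (1/2) * X ^ 3) * hhalf - X ^ 3 * PowerSeries.C (1/2) * hhalf) (3 * n - 1)
  obtain ⟨r, rfl⟩ : ∃ r, n = r + 1 := ⟨n - 1, by omega⟩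
  rw [show 3 * (r + 1) - 1 = 3 * r + 2 by omega] at *
  have hd : derivative ℚ (PowerSeries.C (1/4) * X^3 - PowerSeries.C (1/8) * X^6 : PowerSeries ℚ) = X ^ 2 * (PowerSeries.C (3/4) * (1 - X ^ 3)) := by
    have a3 : (PowerSeries.C (3/4) : PowerSeries ℚ) = PowerSeries.C (1/4) * 3 := by
      rw [show (3 : PowerSeries ℚ) = PowerSeries.C 3 from (map_ofNat PowerSeries.C 3).symm, ← map_mul]; norm_num
    have a6 : (PowerSeries.C (1/4) : PowerSeries ℚ) = PowerSeries.C (1/8) * 2 := by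
      rw [show (2 : PowerSeries ℚ) = PowerSeries.C 2 from (map_ofNat PowerSeries.C 2).symm, ← map_mul]; norm_num
    rw [a3, a6]
    have d2 : derivative ℚ (2 : PowerSeries ℚ) = 0 := by
      exact_mod_cast (derivative ℚ).map_natCast 2
    simp [Derivation.leibniz, Derivation.leibniz_pow, d2]
    ring
  rw [hd, mul_assoc, coeff_X_pow_mul, mul_assoc, coeff_C_mul, mul_pow, 
    show (2 : PowerSeries ℚ) ^ (3 * r + 2 + 1) = PowerSeries.C (2 ^ (3 * r + 3)) by rw [map_pow]; congr 1,
    mul_left_comm, coeff_C_mul, sub_mul, one_mul, map_sub, coeff_inv_pow _ _ _ hpsi, if_pos ⟨r, rfl⟩,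
    Nat.mul_div_cancel_left _ (by norm_num : 0 < 3)] at hl
  rw [show 3 * (r + 1) = 3 * r + 2 + 1 by ring]
  have f1 := Nat.add_choose_mul_factorial_mul_factorial (3 * r + 2) r
  rw [← Nat.choose_symm_add] at f1
  rcases r with _ | t
  · simp [coeff_X_pow_mul', Nat.factorial] at hl ⊢
    linarith
  · rw [show 3 * (t + 1) = 3 * t + 3 by ring] at hl f1 ⊢
    rw [coeff_X_pow_mul, coeff_inv_pow _ _ _ hpsi, if_pos ⟨t, rfl⟩,
      Nat.mul_div_cancel_left _ (by norm_num : 0 < 3)] at hl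
    have f2 := Nat.add_choose_mul_factorial_mul_factorial (3 * t + 3 + 2) t
    rw [← Nat.choose_symm_add] at f2
    have f3 : (3 * t + 3 + 2 + (t + 1)).factorial = (4 * t + 6) * (4 * t + 5).factorial := by
      rw [show 3 * t + 3 + 2 + (t + 1) = 4 * t + 5 + 1 by ring, Nat.factorial_succ]
    rw [show 3 * t + 3 + 2 + t = 4 * t + 5 by ring] at f2 hl
    rw [show 4 * (t + 1 + 1) - 3 = 4 * t + 5 by omega]
    rw [f3] at f1
    generalize Nat.choose (4 * t + 5) (3 * t + 3 + 2) = c1 at *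
    generalize Nat.choose (3 * t + 3 + 2 + (t + 1)) (3 * t + 3 + 2) = c0 at *
    generalize (4 * t + 5).factorial = F at *
    generalize (3 * t + 3 + 2).factorial = G at *
    generalize coeff (3 * t + 3 + 2 + 1) Cc = x at *
    rw [Nat.factorial_succ (t+1)]
    rw [Nat.factorial_succ t] at f1 ⊢
    have f1' : (c0 : ℚ) * G * ((t + 1) * t.factorial) = (4 * t + 6) * F := by exact_mod_cast f1
    have f2' : (c1 : ℚ) * G * t.factorial = F := by exact_mod_cast f2
    push_cast at hl ⊢
    have p1 : (2:ℚ) ^ (3 * t + 3 + 3) * (c0 * (1/4)^(t+1) - c1 * (1/4)^t) = 4 * 2 ^ (t + 2) * (c0 - 4 * c1) := by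
      have : (2:ℚ) ^ (3 * t + 3 + 3) = 2 ^ (t+2) * 4 ^ (t + 2) := by
        rw [show (4:ℚ) = 2 ^ 2 by norm_num, ← pow_mul, ← pow_add]; congr 1; ring
      have h4 : (4:ℚ)^t * (1/4)^t = 1 := by rw [← mul_pow]; norm_num
      rw [this]
      linear_combination 2 ^ (t+2) * (4 * c0 - 16 * c1) * h4
    rw [p1] at hl
    have h3 : (3 * (t:ℚ) + 3 + 2 + 1) ≠ 0 := by positivity
    apply mul_left_cancel₀ h3
    linear_combination (G * ((t + 1 + 1) * ((t + 1) * t.factorial)) : ℚ) * hl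
      + 3 * (t + 2) * 2 ^ (t+2) * f1' - 12 * (t + 2) * (t+1) * 2 ^ (t+2) * f2'
end KW
namespace KW

/-- ballot condition on prefixes -/
def Pre (w : List KLetter) : Prop :=
  ∀ p, p <+: w → p.count KLetter.B ≤ p.count KLetter.A ∧ p.count KLetter.C ≤ p.count KLetter.A

/-- all letters occur equally often -/
def Bal (w : List KLetter) : Prop :=
  w.count KLetter.A = w.count KLetter.B ∧ w.count KLetter.A = w.count KLetter.C

/-- Kreweras word of some length -/
def IsK (w : List KLetter) : Prop := Pre w ∧ Bal w

lemma len_eq (w : List KLetter) :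
    w.length = w.count KLetter.A + w.count KLetter.B + w.count KLetter.C := by
  induction w with
  | nil => rfl
  | cons a w ih => cases a <;> simp [ih] <;> omega

lemma isKrew_iff (n : ℕ) (w : List KLetter) : IsKrewerasWord n w ↔ IsK w ∧ w.length = 3 * n := by
  have hl := len_eq w
  have hp : (∀ k : ℕ, (w.take k).count KLetter.B ≤ (w.take k).count KLetter.A ∧
           (w.take k).count KLetter.C ≤ (w.take k).count KLetter.A) ↔ Pre w := by
    constructor
    · intro h p hp
      rw [List.prefix_iff_eq_take] at hp
      rw [hp]; exact h _
    · intro h k; exact h _ (List.take_prefix _ _)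
  unfold IsKrewerasWord IsK Bal
  rw [hp]
  constructor
  · rintro ⟨h1, h2, h3, h4, h5⟩; exact ⟨⟨h5, by omega⟩, h1⟩
  · rintro ⟨⟨h5, h6⟩, h1⟩; exact ⟨h1, by omega, by omega, by omega, h5⟩

lemma pre_append (u v : List KLetter) : Pre (u ++ v) ↔ Pre u ∧ ∀ p, p <+: v →
    u.count KLetter.B + p.count KLetter.B ≤ u.count KLetter.A + p.count KLetter.A ∧
    u.count KLetter.C + p.count KLetter.C ≤ u.count KLetter.A + p.count KLetter.A := by
  constructor
  · intro h
    refine ⟨fun p hp => h p (hp.trans (List.prefix_append _ _)), fun p hp => ?_⟩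
    have := h (u ++ p) ((List.prefix_append_right_inj u).2 hp)
    simpa using this
  · rintro ⟨h1, h2⟩ p hp
    rcases List.prefix_or_prefix_of_prefix hp (List.prefix_append u v) with h | h
    · exact h1 p h
    · obtain ⟨r, rfl⟩ := h
      have := h2 r ((List.prefix_append_right_inj u).1 hp)
      simpa using this

lemma pre_nil : Pre [] := by
  intro p hp
  rw [List.prefix_nil] at hp
  subst hp; simp

lemma isK_nil : IsK [] := ⟨pre_nil, rfl, rfl⟩

lemma Pre.left_part {u v : List KLetter} (h : Pre (u ++ v)) : Pre u := ((pre_append _ _).1 h).1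

lemma pre_insert (p u q : List KLetter) (hu : IsK u) : Pre (p ++ u ++ q) ↔ Pre (p ++ q) := by
  obtain ⟨hu, hb1, hb2⟩ := hu
  rw [pre_append, pre_append, pre_append]
  simp only [List.count_append]
  constructor
  · rintro ⟨⟨h1, h2⟩, h3⟩
    exact ⟨h1, fun r hr => by have := h3 r hr; omega⟩
  · rintro ⟨h1, h2⟩
    refine ⟨⟨h1, fun r hr => ?_⟩, fun r hr => by have := h2 r hr; omega⟩
    have := hu r hr
    have := h1 p List.prefix_rfl
    omega

lemma bal_insert (p u q : List KLetter) (hu : Bal u) : Bal (p ++ u ++ q) ↔ Bal (p ++ q) := by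
  obtain ⟨hb1, hb2⟩ := hu
  unfold Bal
  simp only [List.count_append]
  omega

lemma isK_insert (p u q : List KLetter) (hu : IsK u) : IsK (p ++ u ++ q) ↔ IsK (p ++ q) := by
  unfold IsK
  rw [pre_insert p u q hu, bal_insert p u q hu.2]

lemma isK_append_left {u : List KLetter} (hu : IsK u) (v : List KLetter) : IsK (u ++ v) ↔ IsK v := by
  simpa using isK_insert [] u v hu

/-- the word obtained by inserting a word after each letter -/
def flat (l : List (KLetter × List KLetter)) : List KLetter := l.flatMap (fun p => p.1 :: p.2)

/-- all inserted words are Kreweras -/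
def AllK (l : List (KLetter × List KLetter)) : Prop := ∀ x ∈ l, IsK x.2

lemma flat_nil : flat [] = [] := rfl
lemma flat_cons (x l) : flat (x :: l) = x.1 :: (x.2 ++ flat l) := by simp [flat]
lemma flat_append (l m) : flat (l ++ m) = flat l ++ flat m := by simp [flat]
lemma flat_eq_nil {l} : flat l = [] ↔ l = [] := by
  cases l <;> simp [flat]

lemma isK_flat (l) (hl : AllK l) (p : List KLetter) : IsK (p ++ flat l) ↔ IsK (p ++ l.map Prod.fst) := by
  induction l generalizing p with
  | nil => simp [flat]
  | cons x l ih =>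
    have hx : IsK x.2 := hl x (by simp)
    have hl' : AllK l := fun y hy => hl y (by simp [hy])
    have h1 := isK_insert (p ++ [x.1]) x.2 (flat l) hx
    have h2 := ih hl' (p ++ [x.1])
    rw [flat_cons]
    simp only [List.append_assoc, List.nil_append, List.map_cons, List.cons_append] at h1 h2 ⊢
    rw [h1, h2]

lemma isK_flat0 (l) (hl : AllK l) : IsK (flat l) ↔ IsK (l.map Prod.fst) := by
  simpa using isK_flat l hl []

/-- maximality of the inserted words -/
def Good (l : List (KLetter × List KLetter)) : Prop :=
  ∀ l1 x l2, l = l1 ++ x :: l2 → ∀ p, p <+: flat l2 → IsK p → p = []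

lemma Good.head {x l} (h : Good (x :: l)) : ∀ p, p <+: flat l → IsK p → p = [] :=
  h [] x l rfl

lemma Good.tail {x l} (h : Good (x :: l)) : Good l := by
  intro l1 y l2 e
  exact h (x :: l1) y l2 (by rw [e]; rfl)

lemma Good.cons {x l} (h : Good l) (h2 : ∀ p, p <+: flat l → IsK p → p = []) : Good (x :: l) := by
  intro l1 y l2 e
  rcases l1 with _ | ⟨z, l1⟩
  · simp at e
    rw [← e.2]; exact h2
  · simp at e
    exact h l1 y l2 e.2

lemma AllK.tail {x l} (h : AllK (x :: l)) : AllK l := fun y hy => h y (by simp [hy])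
lemma AllK.head {x l} (h : AllK (x :: l)) : IsK x.2 := h x (by simp)

lemma exists_parse (w : List KLetter) : ∃ l, flat l = w ∧ AllK l ∧ Good l := by
  induction hn : w.length using Nat.strong_induction_on generalizing w with
  | _ n ih =>
  rcases w with _ | ⟨a, w⟩
  · refine ⟨[], rfl, ?_, ?_⟩
    · intro x hx; simp at hx
    · intro l1 x l2 e; simp at e
  · classical
    have hex : ∃ k, k ≤ w.length ∧ IsK (w.take k) := ⟨0, by simp, by simpa using isK_nil⟩
    have hk := Nat.findGreatest_spec (P := fun k => IsK (w.take k)) (n := w.length) (m := 0) (by simp)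
      (by simpa using isK_nil)
    set k := Nat.findGreatest (fun k => IsK (w.take k)) w.length with hkdef
    have hkle : k ≤ w.length := Nat.findGreatest_le _
    obtain ⟨l, h1, h2, h3⟩ := ih (w.drop k).length (by simp at hn ⊢; omega) (w.drop k) rfl
    refine ⟨(a, w.take k) :: l, ?_, ?_, h3.cons ?_⟩
    · rw [flat_cons, h1]; simp
    · intro x hx
      rcases List.mem_cons.1 hx with rfl | hx
      · exact hk
      · exact h2 x hx
    · intro p hp hpK
      rw [h1] at hp
      by_contra hne
      have hpos : 0 < p.length := List.length_pos_iff.2 hne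
      have e : w.take k ++ p = w.take (k + p.length) := by
        rw [List.take_add, List.prefix_iff_eq_take.1 hp]
        simp
      have hK : IsK (w.take (k + p.length)) := by
        rw [← e, isK_append_left hk]; exact hpK
      have hle : k + p.length ≤ w.length := by
        have := hp.length_le
        simp at this; omega
      have := Nat.le_findGreatest (P := fun k => IsK (w.take k)) hle hK
      omega

lemma parse_unique (l l') (h : flat l = flat l') (hl : AllK l) (hl' : AllK l') (hg : Good l) (hg' : Good l') :
    l = l' := by
  induction l generalizing l' with
  | nil =>
    rw [flat_nil] at h
    exact (flat_eq_nil.1 h.symm).symm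
  | cons x l ih =>
    rcases l' with _ | ⟨x', l'⟩
    · rw [flat_nil] at h; exact flat_eq_nil.1 h
    · rw [flat_cons, flat_cons, List.cons.injEq] at h
      obtain ⟨ha, h⟩ := h
      have key : x.2 = x'.2 := by
        rcases List.append_eq_append_iff.1 h with ⟨p, e1, e2⟩ | ⟨p, e1, e2⟩
        · have : IsK p := by
            rw [← isK_append_left hl.head, ← e1]; exact hl'.head
          have := hg.head p ⟨_, e2.symm⟩ this
          rw [e1, this]; simp
        · have : IsK p := by
            rw [← isK_append_left hl'.head, ← e1]; exact hl.head
          have := hg'.head p ⟨_, e2.symm⟩ this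
          rw [e1, this]; simp
      rw [key] at h
      have h := List.append_cancel_left h
      rw [ih l' h hl.tail hl'.tail hg.tail hg'.tail]
      congr 1
      exact Prod.ext ha key

/-- connected words -/
def Conn (s : List KLetter) : Prop :=
  IsK s ∧ s ≠ [] ∧ ∀ u, u <:+: s → u ≠ [] → u ≠ s → ¬ IsK u

lemma flat_head_split (l p) (hp : p <+: flat l) (hne : p ≠ []) :
    ∃ l3 y l4 q, l = l3 ++ y :: l4 ∧ p = flat l3 ++ y.1 :: q ∧ q <+: y.2 := by
  induction l generalizing p with
  | nil => rw [flat_nil, List.prefix_nil] at hp; exact absurd hp hne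
  | cons x l ih =>
    rcases p with _ | ⟨a, p⟩
    · exact absurd rfl hne
    · rw [flat_cons, List.cons_prefix_cons] at hp
      obtain ⟨rfl, hp⟩ := hp
      rcases List.prefix_or_prefix_of_prefix hp (List.prefix_append x.2 (flat l)) with h | h
      · exact ⟨[], x, l, p, rfl, rfl, h⟩
      · obtain ⟨r, rfl⟩ := h
        have hr := (List.prefix_append_right_inj _).1 hp
        by_cases hr0 : r = []
        · subst hr0
          exact ⟨[], x, l, x.2, rfl, by simp [flat], List.prefix_rfl⟩
        · obtain ⟨l3, y, l4, q, e1, e2, e3⟩ := ih r hr hr0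
          exact ⟨x :: l3, y, l4, q, by rw [e1]; rfl, by rw [e2, flat_cons]; simp, e3⟩

lemma good_of_conn (l) (hl : AllK l) (hc : Conn (l.map Prod.fst)) : Good l := by
  intro l1 x l2 e p hp hpK
  by_contra hne
  obtain ⟨l3, y, l4, q, rfl, rfl, e3⟩ := flat_head_split l2 p hp hne
  have hy : IsK y.2 := hl y (by rw [e]; simp)
  have hq : IsK q := by
    obtain ⟨r, hr⟩ := e3
    rw [← hr] at hy
    have hqp : Pre q := hy.1.left_part
    refine ⟨hqp, ?_⟩
    have h1 := hqp q List.prefix_rfl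
    have h2 := hpK.2
    have h3 := hpK.1 (flat l3 ++ [y.1]) ⟨q, by simp⟩
    unfold Bal at h2 ⊢
    rw [show flat l3 ++ y.1 :: q = (flat l3 ++ [y.1]) ++ q by simp] at h2
    simp only [List.count_append] at h2 h3
    omega
  have hl3 : AllK (l3 ++ [(y.1, q)]) := by
    intro z hz
    rw [List.mem_append] at hz
    rcases hz with hz | hz
    · exact hl z (by rw [e]; simp [hz])
    · simp at hz; rw [hz]; exact hq
  have := (isK_flat0 _ hl3).1 (by rw [flat_append]; simpa [flat] using hpK)
  refine hc.2.2 _ ?_ ?_ ?_ this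
  · exact ⟨(l1 ++ [x]).map Prod.fst, l4.map Prod.fst, by rw [e]; simp⟩
  · simp
  · intro h
    have := congrArg List.length h
    rw [e] at this
    simp at this
    omega

lemma conn_of_good (l) (hl : AllK l) (hK : IsK (l.map Prod.fst)) (hne : l ≠ []) (hg : Good l) :
    Conn (l.map Prod.fst) := by
  refine ⟨hK, by simpa using hne, ?_⟩
  rintro u ⟨s1, s2, e⟩ hu0 hus huK
  rw [eq_comm, List.map_eq_append_iff] at e
  obtain ⟨l12, l2, rfl, e, rfl⟩ := e
  rw [List.map_eq_append_iff] at e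
  obtain ⟨l1, lu, rfl, rfl, rfl⟩ := e
  have hlu : AllK lu := fun z hz => hl z (by simp [hz])
  have hl2 : AllK l2 := fun z hz => hl z (by simp [hz])
  have hlu0 : lu ≠ [] := by simpa using hu0
  rcases List.eq_nil_or_concat l1 with rfl | ⟨l1, x, rfl⟩
  · have h2 : IsK (l2.map Prod.fst) := by
      rw [← isK_append_left huK]
      simpa using hK
    obtain ⟨lu, x, rfl⟩ := (List.eq_nil_or_concat lu).resolve_left hlu0
    have := hg lu x l2 (by simp) (flat l2) List.prefix_rfl ((isK_flat0 _ hl2).2 h2)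
    rw [flat_eq_nil] at this
    subst this
    simp at hus
  · have := hg l1 x (lu ++ l2) (by simp) (flat lu) (by rw [flat_append]; exact List.prefix_append _ _)
      ((isK_flat0 _ hlu).2 huK)
    exact hlu0 (flat_eq_nil.1 this)
end KW
namespace KW

instance : Finite KLetter := by
  refine Finite.of_surjective (fun i : Fin 3 => (![KLetter.A, KLetter.B, KLetter.C] i)) ?_
  intro x
  cases x
  · exact ⟨0, rfl⟩
  · exact ⟨1, rfl⟩
  · exact ⟨2, rfl⟩

/-- words with ballot condition and given letter counts -/
def Wd (a b c : ℕ) : Set (List KLetter) :=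
  {w | Pre w ∧ w.count KLetter.A = a ∧ w.count KLetter.B = b ∧ w.count KLetter.C = c}

lemma Wd_finite (a b c : ℕ) : (Wd a b c).Finite := by
  apply (List.finite_length_eq KLetter (a + b + c)).subset
  rintro w ⟨-, h1, h2, h3⟩
  simp only [Set.mem_ofPred_eq, len_eq, h1, h2, h3]

/-- the counting function -/
noncomputable def Nw (a b c : ℕ) : ℚ := (Wd a b c).ncard

lemma pre_snoc (w : List KLetter) (x : KLetter) : Pre (w ++ [x]) ↔ Pre w ∧
    (w ++ [x]).count KLetter.B ≤ (w ++ [x]).count KLetter.A ∧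
    (w ++ [x]).count KLetter.C ≤ (w ++ [x]).count KLetter.A := by
  constructor
  · intro h; exact ⟨h.left_part, h _ List.prefix_rfl⟩
  · rintro ⟨h1, h2⟩ p hp
    rcases List.prefix_concat_iff.1 hp with rfl | hp
    · exact h2
    · exact h1 p hp

lemma count_neg (w : List KLetter) : (w.map negL).count KLetter.A = w.count KLetter.A ∧
    (w.map negL).count KLetter.B = w.count KLetter.C ∧ (w.map negL).count KLetter.C = w.count KLetter.B := by
  induction w with
  | nil => simp
  | cons a w ih => cases a <;> simp [negL, ih]

lemma negL_invol : Function.Involutive negL := by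
  intro x; cases x <;> rfl

lemma pre_neg (w : List KLetter) (h : Pre w) : Pre (w.map negL) := by
  intro p hp
  have h1 : p.map negL <+: w := by
    have := hp.map negL
    rwa [List.map_map, negL_invol.comp_self, List.map_id] at this
  have h2 := h _ h1
  have := count_neg p
  omega

lemma Nw_symm_le (a b c : ℕ) : (Wd a b c).ncard ≤ (Wd a c b).ncard := by
  apply Set.ncard_le_ncard_of_injOn (fun w => w.map negL) _ _ (Wd_finite _ _ _)
  · rintro w ⟨h1, h2, h3, h4⟩
    have := count_neg w
    exact ⟨pre_neg w h1, by omega, by omega, by omega⟩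
  · intro u _ v _ h
    exact List.map_injective_iff.2 negL_invol.injective h

lemma Wd_step (a b c : ℕ) (hb : b ≤ a) (hc : c ≤ a) (h0 : 0 < a + b + c) :
    (Wd a b c).ncard = (if 1 ≤ a then (Wd (a-1) b c).ncard else 0)
      + (if 1 ≤ b then (Wd a (b-1) c).ncard else 0) + (if 1 ≤ c then (Wd a b (c-1)).ncard else 0) := by
  have inj : ∀ x : KLetter, Function.Injective (fun w : List KLetter => w ++ [x]) :=
    fun x u v h => List.append_cancel_right h
  let f : KLetter → List KLetter → List KLetter := fun x w => w ++ [x]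
  have e : Wd a b c = (f KLetter.A '' {w | 1 ≤ a ∧ w ∈ Wd (a-1) b c} ∪ f KLetter.B '' {w | 1 ≤ b ∧ w ∈ Wd a (b-1) c})
      ∪ f KLetter.C '' {w | 1 ≤ c ∧ w ∈ Wd a b (c-1)} := by
    ext w
    constructor
    · intro hw
      rcases List.eq_nil_or_concat w with rfl | ⟨w, x, rfl⟩
      · obtain ⟨h1, h2, h3, h4⟩ := hw
        simp at h2 h3 h4; omega
      · obtain ⟨h1, h2, h3, h4⟩ := hw
        rw [List.concat_eq_append] at *
        rw [pre_snoc] at h1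
        cases x
        · left; left
          simp at h2 h3 h4
          exact ⟨w, ⟨by omega, h1.1, by omega, by omega, by omega⟩, rfl⟩
        · left; right
          simp at h2 h3 h4
          exact ⟨w, ⟨by omega, h1.1, by omega, by omega, by omega⟩, rfl⟩
        · right
          simp at h2 h3 h4
          exact ⟨w, ⟨by omega, h1.1, by omega, by omega, by omega⟩, rfl⟩
    · rintro ((⟨w, ⟨h0, h1, h2, h3, h4⟩, rfl⟩ | ⟨w, ⟨h0, h1, h2, h3, h4⟩, rfl⟩) | ⟨w, ⟨h0, h1, h2, h3, h4⟩, rfl⟩)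
      all_goals
        refine ⟨(pre_snoc _ _).2 ⟨h1, ?_, ?_⟩, ?_, ?_, ?_⟩ <;> simp [f] <;> omega
  have fin : ∀ (p : Prop) (a b c : ℕ), {w | p ∧ w ∈ Wd a b c}.Finite := fun p a b c =>
    (Wd_finite a b c).subset (fun w hw => hw.2)
  have nc : ∀ (p : Prop) [Decidable p] (a b c : ℕ), {w | p ∧ w ∈ Wd a b c}.ncard = if p then (Wd a b c).ncard else 0 := by
    intro p _ a b c
    split_ifs with hp <;> simp [hp]
  have dis : ∀ (x y : KLetter) (S T : Set (List KLetter)), x ≠ y → Disjoint (f x '' S) (f y '' T) := by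
    intro x y S T hxy
    rw [Set.disjoint_left]
    rintro _ ⟨u, _, rfl⟩ ⟨v, _, h⟩
    have := (List.append_inj' h rfl).2
    simp at this
    exact hxy this.symm
  rw [e, Set.ncard_union_eq
      (by rw [Set.disjoint_union_left]; exact ⟨dis _ _ _ _ (by simp), dis _ _ _ _ (by simp)⟩)
      (((fin _ _ _ _).image _).union ((fin _ _ _ _).image _)) ((fin _ _ _ _).image _),
    Set.ncard_union_eq (dis _ _ _ _ (by simp)) ((fin _ _ _ _).image _) ((fin _ _ _ _).image _),
    Set.ncard_image_of_injective _ (inj _),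
    Set.ncard_image_of_injective _ (inj _), Set.ncard_image_of_injective _ (inj _), nc, nc, nc]

lemma Nw_isN : IsN Nw where
  zero := by
    have : Wd 0 0 0 = {[]} := by
      ext w
      simp only [Wd, Set.mem_ofPred_eq, Set.mem_singleton_iff]
      constructor
      · rintro ⟨_, h⟩
        have := len_eq w
        exact List.length_eq_zero_iff.1 (by omega)
      · rintro rfl; exact ⟨pre_nil, rfl, rfl, rfl⟩
    simp [Nw, this]
  gtb := by
    intro a b c h
    have : Wd a b c = ∅ := by
      ext w
      simp only [Wd, Set.mem_ofPred_eq, Set.mem_empty_iff_false, iff_false]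
      rintro ⟨h1, h2⟩
      have := h1 w List.prefix_rfl
      omega
    simp [Nw, this]
  gtc := by
    intro a b c h
    have : Wd a b c = ∅ := by
      ext w
      simp only [Wd, Set.mem_ofPred_eq, Set.mem_empty_iff_false, iff_false]
      rintro ⟨h1, h2⟩
      have := h1 w List.prefix_rfl
      omega
    simp [Nw, this]
  symm := by
    intro a b c
    unfold Nw
    rw [le_antisymm (Nw_symm_le a b c) (Nw_symm_le a c b)]
  step := by
    intro a b c hb hc h0
    unfold Nw
    rw [Wd_step a b c hb hc h0]
    push_cast
    rfl

/-- Kreweras words by length -/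
def KS (r : ℕ) : Set (List KLetter) := {w | IsK w ∧ w.length = r}

lemma coeff_Kx (r : ℕ) : PowerSeries.coeff r (Kx Nw) = Nat.card (KS r) := by
  rw [Kx, PowerSeries.coeff_mk]
  split_ifs with h
  · obtain ⟨m, rfl⟩ := h
    rw [Nat.mul_div_cancel_left _ (by norm_num : 0 < 3), Nw]
    congr 2
    ext w
    have := len_eq w
    simp only [Wd, KS, Set.mem_ofPred_eq, IsK, Bal]
    constructor
    · rintro ⟨h1, h2⟩; exact ⟨⟨h1, by omega⟩, by omega⟩
    · rintro ⟨⟨h1, h2⟩, h3⟩; exact ⟨h1, by omega⟩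
  · have : KS r = ∅ := by
      ext w
      simp only [KS, Set.mem_ofPred_eq, Set.mem_empty_iff_false, iff_false, IsK, Bal]
      have := len_eq w
      rintro ⟨⟨h1, h2⟩, h3⟩
      omega
    simp [this]

instance (r : ℕ) : Finite (KS r) :=
  ((List.finite_length_eq KLetter r).subset (fun _ hw => hw.2)).to_subtype

/-- fillings of a skeleton -/
def TS (s : List KLetter) (r : ℕ) : Set (List (KLetter × List KLetter)) :=
  {l | l.map Prod.fst = s ∧ AllK l ∧ (flat l).length = r}

end KW
namespace KW

lemma TS_zero_nil : TS [] 0 = {[]} := by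
  ext l
  simp only [TS, Set.mem_ofPred_eq, Set.mem_singleton_iff, List.map_eq_nil_iff]
  constructor
  · rintro ⟨h, -⟩; exact h
  · rintro rfl; exact ⟨rfl, by intro x hx; simp at hx, rfl⟩

/-- peel off the first letter -/
def TSequiv (a : KLetter) (s : List KLetter) (r : ℕ) :
    TS (a :: s) (r + 1) ≃ Σ p : Finset.HasAntidiagonal.antidiagonal r, KS p.1.1 × TS s p.1.2 where
  toFun l := match l with
    | ⟨[], h⟩ => absurd h.1 (by simp)
    | ⟨x :: l, h⟩ => ⟨⟨(x.2.length, (flat l).length), by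
        have := h.2.2
        rw [flat_cons] at this
        simp at this
        simp [this]⟩, ⟨x.2, h.2.1.head, rfl⟩, ⟨l, by
          have := h.1
          simp at this
          exact this.2, h.2.1.tail, rfl⟩⟩
  invFun q := ⟨(a, q.2.1.1) :: q.2.2.1, by
    obtain ⟨⟨⟨i, j⟩, hp⟩, ⟨u, hu⟩, ⟨l, hl⟩⟩ := q
    have hp := Finset.HasAntidiagonal.mem_antidiagonal.1 hp
    refine ⟨by simp [hl.1], ?_, ?_⟩
    · intro x hx
      rcases List.mem_cons.1 hx with rfl | hx
      · exact hu.1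
      · exact hl.2.1 x hx
    · rw [flat_cons]
      have h1 := hu.2
      have h2 := hl.2.2
      simp at h1 h2 hp ⊢
      omega⟩
  left_inv l := by
    obtain ⟨l, h⟩ := l
    rcases l with _ | ⟨x, l⟩
    · exact absurd h.1 (by simp)
    · have := h.1
      simp at this
      apply Subtype.ext
      simp [← this.1]
  right_inv q := by
    obtain ⟨⟨⟨i, j⟩, hp⟩, ⟨u, hu⟩, ⟨l, hl⟩⟩ := q
    obtain ⟨hu1, hu2⟩ := hu
    obtain ⟨hl0, hl1, hl2⟩ := hl
    dsimp only at hu2 hl2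
    subst hu2 hl2
    rfl

lemma TS_card (s : List KLetter) : ∀ r, Finite (TS s r) ∧
    (Nat.card (TS s r) : ℚ) = PowerSeries.coeff r ((PowerSeries.X * Kx Nw) ^ s.length) := by
  induction s with
  | nil =>
    intro r
    rcases r with _ | r
    · rw [TS_zero_nil]
      exact ⟨inferInstance, by simp⟩
    · have : TS [] (r+1) = ∅ := by
        ext l
        simp only [TS, Set.mem_ofPred_eq, Set.mem_empty_iff_false, List.map_eq_nil_iff, iff_false]
        rintro ⟨rfl, -, h⟩
        simp [flat] at h
      rw [this]
      exact ⟨inferInstance, by simp [PowerSeries.coeff_one]⟩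
  | cons a s ih =>
    intro r
    rcases r with _ | r
    · have : TS (a :: s) 0 = ∅ := by
        ext l
        simp only [TS, Set.mem_ofPred_eq, Set.mem_empty_iff_false, iff_false, List.length_eq_zero_iff, flat_eq_nil]
        rintro ⟨h, -, rfl⟩
        simp at h
      rw [this]
      exact ⟨inferInstance, by simp⟩
    · have hf : ∀ i, Finite (TS s i) := fun i => (ih i).1
      refine ⟨Finite.of_equiv _ (TSequiv a s r).symm, ?_⟩
      rw [Nat.card_congr (TSequiv a s r), Nat.card_sigma, List.length_cons, pow_succ', mul_assoc,
        PowerSeries.coeff_succ_X_mul, PowerSeries.coeff_mul]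
      push_cast
      refine Eq.trans ?_ (Finset.sum_coe_sort (Finset.HasAntidiagonal.antidiagonal r) (fun p =>
        (PowerSeries.coeff p.1) (Kx Nw) * (PowerSeries.coeff p.2) ((PowerSeries.X * Kx Nw) ^ s.length)))
      apply Finset.sum_congr rfl
      intro p _
      rw [Nat.card_prod, coeff_Kx, ← (ih _).2]
      push_cast
      rfl

/-- connected words up to a given length -/
def DS (r : ℕ) : Set (List KLetter) := {s | Conn s ∧ s.length ≤ r}

/-- connected words of a given length -/
def CS (r : ℕ) : Set (List KLetter) := {s | Conn s ∧ s.length = r}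

lemma CS_finite (r : ℕ) : (CS r).Finite :=
  (List.finite_length_eq KLetter r).subset (fun _ hw => hw.2)

lemma DS_finite (r : ℕ) : (DS r).Finite :=
  (List.finite_length_le KLetter r).subset (fun _ hw => hw.2)

lemma length_le_flat (l) : l.length ≤ (flat l).length := by
  induction l with
  | nil => simp
  | cons x l ih => rw [flat_cons]; simp; omega

/-- decomposition map -/
def decomp (r : ℕ) : (Σ s : DS r, TS s.1 r) → {w : List KLetter // w ∈ KS r ∧ w ≠ []} :=
  fun q => ⟨flat q.2.1, by
    obtain ⟨⟨s, hs⟩, ⟨l, hl⟩⟩ := q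
    have h1 : l.map Prod.fst = s := hl.1
    have h2 := hl.2.1
    have h3 := hl.2.2
    subst h1
    refine ⟨⟨(isK_flat0 l h2).2 hs.1.1, h3⟩, ?_⟩
    rw [Ne, flat_eq_nil]
    have := hs.1.2.1
    simpa using this⟩

lemma decomp_bij (r : ℕ) : Function.Bijective (decomp r) := by
  constructor
  · rintro ⟨⟨s, hs⟩, ⟨l, hl⟩⟩ ⟨⟨s2, hs'⟩, ⟨l', hl'⟩⟩ h
    have h1 : l.map Prod.fst = s := hl.1
    have h2 := hl.2.1
    have h1' : l'.map Prod.fst = s2 := hl'.1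
    have h2' := hl'.2.1
    subst h1
    subst h1'
    have h : flat l = flat l' := congrArg Subtype.val h
    have := parse_unique l l' h h2 h2' (good_of_conn l h2 hs.1) (good_of_conn l' h2' hs'.1)
    subst this
    rfl
  · rintro ⟨w, ⟨hw, hr⟩, hne⟩
    obtain ⟨l, rfl, h2, h3⟩ := exists_parse w
    rw [isK_flat0 l h2] at hw
    have hne : l ≠ [] := by rwa [Ne, flat_eq_nil] at hne
    have hc := conn_of_good l h2 hw hne h3
    exact ⟨⟨⟨l.map Prod.fst, hc, by rw [List.length_map, ← hr]; exact length_le_flat l⟩, ⟨l, rfl, h2, hr⟩⟩, rfl⟩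

/-- generating function of connected words -/
noncomputable def Cx : PowerSeries ℚ := PowerSeries.mk fun r => ((CS r).ncard : ℚ)

lemma card_nonempty (r : ℕ) : (Nat.card {w : List KLetter // w ∈ KS r ∧ w ≠ []} : ℚ) =
    ∑ d ∈ Finset.range (r+1), PowerSeries.coeff d Cx *
      PowerSeries.coeff r ((PowerSeries.X * Kx Nw) ^ d) := by
  classical
  rw [← Nat.card_congr (Equiv.ofBijective _ (decomp_bij r))]
  have : Finite (DS r) := (DS_finite r).to_subtype
  have hf : ∀ s : DS r, Finite (TS s.1 r) := fun s => (TS_card s.1 r).1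
  let _ : Fintype (DS r) := Fintype.ofFinite _
  rw [Nat.card_sigma]
  push_cast
  simp_rw [fun s : DS r => (TS_card s.1 r).2]
  rw [← Finset.sum_fiberwise_of_maps_to (s := Finset.univ) (t := Finset.range (r+1)) (g := fun s : DS r => s.1.length)
    (fun s _ => Finset.mem_range.2 (Nat.lt_succ_of_le s.2.2))]
  apply Finset.sum_congr rfl
  intro d hd
  rw [Finset.mem_range] at hd
  rw [Finset.sum_congr rfl (g := fun _ => PowerSeries.coeff r ((PowerSeries.X * Kx Nw) ^ d))
    (by intro s hs; rw [(Finset.mem_filter.1 hs).2])]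
  rw [Finset.sum_const, nsmul_eq_mul, Cx, PowerSeries.coeff_mk]
  congr 2
  rw [← Set.ncard_coe_finset, ← Set.ncard_image_of_injective _ Subtype.val_injective]
  congr 1
  ext s
  simp only [Set.mem_image, Finset.coe_filter, Finset.mem_univ, true_and, Set.mem_ofPred_eq, CS]
  constructor
  · rintro ⟨s, h, rfl⟩; exact ⟨s.2.1, h⟩
  · rintro ⟨h1, h2⟩; exact ⟨⟨s, h1, by omega⟩, h2, rfl⟩

lemma Kx_Cx : Kx Nw = 1 + Cx.subst (PowerSeries.X * Kx Nw : PowerSeries ℚ) := by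
  have hs : PowerSeries.HasSubst (PowerSeries.X * Kx Nw : PowerSeries ℚ) :=
    PowerSeries.HasSubst.of_constantCoeff_zero' (by simp)
  ext r
  rw [map_add, PowerSeries.coeff_subst' hs, finsum_eq_sum_of_support_subset (s := Finset.range (r+1))]
  · simp only [smul_eq_mul]
    rw [← card_nonempty, coeff_Kx, PowerSeries.coeff_one]
    split_ifs with h
    · subst h
      have e1 : KS 0 = {[]} := by
        ext w
        simp only [KS, Set.mem_ofPred_eq, Set.mem_singleton_iff, List.length_eq_zero_iff]
        constructor
        · rintro ⟨-, h⟩; exact h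
        · rintro rfl; exact ⟨isK_nil, rfl⟩
      have e2 : IsEmpty {w : List KLetter // w ∈ KS 0 ∧ w ≠ []} := by
        constructor
        rintro ⟨w, h1, h2⟩
        rw [e1] at h1
        exact h2 h1
      rw [@Nat.card_of_isEmpty _ e2, e1]
      simp
    · rw [zero_add]
      congr 1
      apply Nat.card_congr
      apply Equiv.subtypeEquivRight
      intro w
      constructor
      · intro hw
        refine ⟨hw, ?_⟩
        rintro rfl
        exact h hw.2.symm
      · exact fun hw => hw.1
  · intro d hd
    rw [Function.mem_support] at hd
    by_contra hlt
    apply hd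
    rw [Finset.coe_range, Set.mem_Iio, not_lt] at hlt
    rw [mul_pow, PowerSeries.coeff_X_pow_mul', if_neg (by omega), smul_zero]

lemma conn_iff (n : ℕ) (hn : 1 ≤ n) (w : List KLetter) : ConnectedKrewerasWord n w ↔ w ∈ CS (3 * n) := by
  unfold ConnectedKrewerasWord CS Conn
  simp only [isKrew_iff, Set.mem_ofPred_eq]
  constructor
  · rintro ⟨⟨h1, h2⟩, h3⟩
    refine ⟨⟨h1, ?_, ?_⟩, h2⟩
    · rintro rfl; simp at h2; omega
    · intro u hu h4 h5 h6
      refine h3 u (u.count KLetter.A) hu h4 h5 ⟨h6, ?_⟩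
      have := len_eq u
      have := h6.2
      unfold Bal at this
      omega
  · rintro ⟨⟨h1, h2, h3⟩, h4⟩
    exact ⟨⟨h1, h4⟩, fun u m hu h5 h6 h7 => h3 u hu h5 h6 h7.1⟩

end KW

/-- The number of connected Kreweras words of length `3n` equals
`2^(n+1) * (4n-3)! / ((3n-1)! * n!)`, stated multiplicatively. -/
theorem connected_kreweras_count (n : ℕ) (hn : 1 ≤ n) :
    Nat.card {w : List KLetter // ConnectedKrewerasWord n w} *
        ((3 * n - 1).factorial * n.factorial)
      = 2 ^ (n + 1) * (4 * n - 3).factorial := by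
  have h := KW.final KW.Nw_isN KW.Cx KW.Kx_Cx n hn
  rw [Nat.card_congr (Equiv.subtypeEquivRight (KW.conn_iff n hn))]
  rw [KW.Cx, PowerSeries.coeff_mk] at h
  exact_mod_cast h
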